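/- (Outgoing-edge statistic determines a noncrossing pairing.) Let π be an m-partite noncrossing pair partition of [md]. Call an edge (block) {i, j} with i < j outgoing for the k-th interval if i lies in the k-th interval {(k−1)d+1, ..., kd}, and incoming for the interval containing j. Then the map sending π to the tuple (s₁(π), ..., s_m(π)), where s_k(π) is the number of edges outgoing from the k-th interval, is injective on the set of m-partite noncrossing pair partitions of [md]. (In a noncrossing pairing, within each interval all incoming edges precede all outgoing edges, so the outgoing-edge counts uniquely determine the partition.) -/

import Mathlib

/-!
A noncrossing pairing is encoded by the fixed-point-free involution `f` exchanging the two elements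
of each edge; `i` opens an edge if `i < f i`.

Let `i < j` lie in one interval. If `i` opened an edge and `j` closed one, then `f j` would lie to
the left of the interval and `f i` to its right, and the two edges would cross. Thus the openers of
an interval form a final segment of it, determined by its length, the outgoing-edge count. Finally
the openers determine `f`: from left to right, each closer has to be matched with the last opener
that is still free.
-/

/-- `i` and `j` lie in the same block of the partition `π`. -/
def SameBlock {n : ℕ} (π : Finpartition (Finset.univ : Finset (Fin n))) (i j : Fin n) : Prop :=
  ∃ B ∈ π.parts, i ∈ B ∧ j ∈ B

/-- A partition of `{1, ..., n}` is noncrossing if there are no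
`i < i' < j < j'` with `i ~ j`, `i' ~ j'` and `i ≁ i'`. -/
def IsNoncrossing {n : ℕ} (π : Finpartition (Finset.univ : Finset (Fin n))) : Prop :=
  ∀ i i' j j' : Fin n, i < i' → i' < j → j < j' →
    SameBlock π i j → SameBlock π i' j' → SameBlock π i i'

/-- A pair partition: every block has exactly two elements. -/
def IsPairPartition {n : ℕ} (π : Finpartition (Finset.univ : Finset (Fin n))) : Prop :=
  ∀ B ∈ π.parts, B.card = 2

/-- An `m`-partite partition (with respect to the consecutive intervals of length `d`):
every block contains at most one element from each interval
`{kd+1, ..., (k+1)d}` (0-indexed: the elements `i` with `i / d = k`). -/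
def IsMPartite {n : ℕ} (d : ℕ) (π : Finpartition (Finset.univ : Finset (Fin n))) : Prop :=
  ∀ B ∈ π.parts, ∀ k : ℕ, (B.filter (fun i : Fin n => (i : ℕ) / d = k)).card ≤ 1


/-- The number of edges outgoing from the `k`-th interval (0-indexed; the interval of
the `i` with `i / d = k`): the number of blocks of `π` whose minimal element lies in
the `k`-th interval.  (An edge `{i, j}` with `i < j` is outgoing for the interval
containing `i` and incoming for the interval containing `j`.) -/
def outCount {n : ℕ} (d : ℕ) (π : Finpartition (Finset.univ : Finset (Fin n)))
    (k : ℕ) : ℕ :=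
  (π.parts.filter (fun B => ∃ i : Fin n, i ∈ B ∧ (i : ℕ) / d = k ∧ ∀ j ∈ B, i ≤ j)).card

theorem eq_of_isRelUpperSet_of_ncard_eq {α : Type*} [LinearOrder α] {P : α → Prop} {s t : Set α}
    (hs : IsRelUpperSet s P) (ht : IsRelUpperSet t P) (hs_fin : s.Finite) (ht_fin : t.Finite)
    (hcard : s.ncard = t.ncard) : s = t := by
  by_cases hst : s ⊆ t
  · exact Set.eq_of_subset_of_ncard_le hst hcard.ge ht_fin
  · obtain ⟨a, has, hat⟩ := Set.not_subset.1 hst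
    have hts : t ⊆ s := fun b hbt ↦
      have hab : a ≤ b := le_of_not_ge fun hba ↦ hat ((ht hbt).2 hba (hs has).1)
      (hs has).2 hab (ht hbt).1
    exact (Set.eq_of_subset_of_ncard_le hts hcard.le hs_fin).symm

/-- The elements at which an edge of the perfect matching with partner map `f` starts. -/
def openers {α : Type*} [LT α] (f : α → α) : Set α :=
  {i | i < f i}

theorem mem_openers {α : Type*} [LT α] {f : α → α} {i : α} : i ∈ openers f ↔ i < f i :=
  Iff.rfl

/-- A noncrossing perfect matching of a linear order, encoded by the map `f` sending each element
to its partner. -/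
structure IsNoncrossingMatching {α : Type*} [LinearOrder α] (f : α → α) : Prop where
  involutive : Function.Involutive f
  apply_ne (i : α) : f i ≠ i
  nested {i j : α} : i < j → j < f i → f j ≤ f i

namespace IsNoncrossingMatching

variable {α : Type*} [LinearOrder α] {f g : α → α}

theorem notMem_openers (hf : IsNoncrossingMatching f) {i : α} : i ∉ openers f ↔ f i < i :=
  not_lt.trans (hf.apply_ne i).le_iff_lt

theorem apply_mem_openers (hf : IsNoncrossingMatching f) {i : α} :
    f i ∈ openers f ↔ i ∉ openers f := by
  rw [hf.notMem_openers, mem_openers, hf.involutive]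

/-- If `f j < g j`, then the `f`-edge opened at `g j` is nested inside `{f j, j}`, so the closer
`f (g j)` lies before `j` and is matched differently by `g`. -/
theorem apply_le_apply_of_eq_on_closers_lt (hf : IsNoncrossingMatching f)
    (hg : IsNoncrossingMatching g) (hfg : openers f = openers g) {j : α} (hj : j ∉ openers g)
    (heq : ∀ k < j, k ∉ openers f → f k = g k) : g j ≤ f j := by
  by_contra! hlt
  have hgj_opener : g j ∈ openers f := hfg ▸ hg.apply_mem_openers.2 hj
  have hgj_lt : g j < f (f j) := by rw [hf.involutive]; exact hg.notMem_openers.1 hj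
  have hle : f (g j) ≤ j := (hf.nested hlt hgj_lt).trans_eq (hf.involutive j)
  have hne : f (g j) ≠ j := fun h ↦ hlt.ne (hf.involutive.eq_iff.1 h).symm
  have hclose : f (g j) ∉ openers f := by
    rwa [hf.apply_mem_openers, not_not]
  have hpartner : g j = g (f (g j)) := by
    rw [← heq _ (hle.lt_of_ne hne) hclose, hf.involutive]
  exact hne (hg.involutive.injective hpartner).symm

theorem eq_of_openers_eq [WellFoundedLT α] (hf : IsNoncrossingMatching f)
    (hg : IsNoncrossingMatching g) (hfg : openers f = openers g) : f = g := by
  have eq_closer (j : α) : j ∉ openers f → f j = g j := by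
    induction j using WellFoundedLT.induction with
    | ind j ih =>
      intro hj
      refine le_antisymm ?_ (hf.apply_le_apply_of_eq_on_closers_lt hg hfg (hfg ▸ hj) ih)
      exact hg.apply_le_apply_of_eq_on_closers_lt hf hfg.symm hj
        fun k hk hkg ↦ (ih k hk (hfg ▸ hkg)).symm
  funext i
  by_cases hi : i ∈ openers f
  · have hclose : f i ∉ openers f := by rwa [hf.apply_mem_openers, not_not]
    have h : i = g (f i) := by rw [← eq_closer _ hclose, hf.involutive]
    exact hg.involutive.eq_iff.1 h.symm
  · exact eq_closer i hi

variable {κ : Type*} [PartialOrder κ] {c : α → κ}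

theorem isRelUpperSet_openers_inter_preimage (hf : IsNoncrossingMatching f) (hc : Monotone c)
    (hcf : ∀ i, c (f i) ≠ c i) (k : κ) :
    IsRelUpperSet (openers f ∩ c ⁻¹' {k}) (c · = k) := by
  rintro i ⟨hi, rfl⟩
  refine ⟨rfl, fun j hij hcj ↦ ⟨?_, hcj⟩⟩
  have interval : (c ⁻¹' {c i}).OrdConnected := Set.ordConnected_singleton.preimage_mono hc
  by_contra hj
  have hfj : f j < j := hf.notMem_openers.1 hj
  have hfj_lt : f j < i := by
    by_contra! h
    exact hcf j ((interval.out rfl hcj ⟨h, hfj.le⟩).trans hcj.symm)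
  have hfi_gt : j < f i := by
    by_contra! h
    exact hcf i (interval.out rfl hcj ⟨hi.le, h⟩)
  have hij_ne : i ≠ j := by rintro rfl; exact hj hi
  have hfi_le : f i ≤ f (f j) :=
    hf.nested hfj_lt (by rw [hf.involutive]; exact hij.lt_of_ne hij_ne)
  rw [hf.involutive] at hfi_le
  exact hfi_gt.not_ge hfi_le

theorem eq_of_ncard_openers_eq [Finite α] (hf : IsNoncrossingMatching f)
    (hg : IsNoncrossingMatching g) (hc : Monotone c) (hcf : ∀ i, c (f i) ≠ c i)
    (hcg : ∀ i, c (g i) ≠ c i)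
    (hcard : ∀ k, (openers f ∩ c ⁻¹' {k}).ncard = (openers g ∩ c ⁻¹' {k}).ncard) : f = g := by
  refine hf.eq_of_openers_eq hg (Set.ext fun i ↦ ?_)
  have hclass : openers f ∩ c ⁻¹' {c i} = openers g ∩ c ⁻¹' {c i} :=
    eq_of_isRelUpperSet_of_ncard_eq (hf.isRelUpperSet_openers_inter_preimage hc hcf _)
      (hg.isRelUpperSet_openers_inter_preimage hc hcg _) (Set.toFinite _) (Set.toFinite _)
      (hcard _)
  simpa using Set.ext_iff.1 hclass i

end IsNoncrossingMatching

theorem finpartition_eq_of_part_eq {α : Type*} [DecidableEq α] {s : Finset α}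
    {P Q : Finpartition s} (h : ∀ a ∈ s, P.part a = Q.part a) : P = Q := by
  have parts_eq (R : Finpartition s) : R.part '' s = R.parts :=
    R.part_surjOn.image_eq_of_mapsTo fun _ ha ↦ R.part_mem.2 ha
  refine Finpartition.ext (Finset.coe_injective ?_)
  rw [← parts_eq P, ← parts_eq Q]
  exact Set.image_congr h

/-- The map `f` sends each element to the other element of its block in the pair partition `π`. -/
structure IsPartnerMap {α : Type*} [Fintype α] [DecidableEq α]
    (π : Finpartition (Finset.univ : Finset α)) (f : α → α) : Prop where
  apply_ne (i : α) : f i ≠ i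
  part_eq (i : α) : π.part i = {i, f i}

theorem IsPairPartition.exists_isPartnerMap {n : ℕ}
    {π : Finpartition (Finset.univ : Finset (Fin n))} (hπ : IsPairPartition π) :
    ∃ f, IsPartnerMap π f := by
  have exists_partner (i : Fin n) : ∃ j, j ≠ i ∧ π.part i = {i, j} := by
    have hi : i ∈ π.part i := π.mem_part_self.2 (Finset.mem_univ i)
    have hcard : (π.part i).card = 2 := hπ _ (π.part_mem.2 (Finset.mem_univ i))
    obtain ⟨j, hj⟩ := Finset.card_eq_one.1
      ((Finset.card_erase_of_mem hi).trans (congrArg (· - 1) hcard))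
    refine ⟨j, Finset.ne_of_mem_erase (hj ▸ Finset.mem_singleton_self j), ?_⟩
    rw [← Finset.insert_erase hi, hj]
  choose f hne hpart using exists_partner
  exact ⟨f, hne, hpart⟩

namespace IsPartnerMap

section Fintype

variable {α : Type*} [Fintype α] [DecidableEq α] {π π' : Finpartition (Finset.univ : Finset α)}
  {f : α → α}

theorem partition_eq (hf : IsPartnerMap π f) (hf' : IsPartnerMap π' f) : π = π' :=
  finpartition_eq_of_part_eq fun i _ ↦ (hf.part_eq i).trans (hf'.part_eq i).symm

theorem mem_part_iff (hf : IsPartnerMap π f) {i j : α} : j ∈ π.part i ↔ j = i ∨ j = f i := by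
  rw [hf.part_eq, Finset.mem_insert, Finset.mem_singleton]

theorem part_apply (hf : IsPartnerMap π f) (i : α) : π.part (f i) = π.part i :=
  π.part_eq_of_mem (π.part_mem.2 (Finset.mem_univ i)) (hf.mem_part_iff.2 (.inr rfl))

theorem involutive (hf : IsPartnerMap π f) : Function.Involutive f := fun i ↦ by
  have hi : i ∈ π.part (f i) := by
    rw [hf.part_apply]; exact hf.mem_part_iff.2 (.inl rfl)
  exact ((hf.mem_part_iff.1 hi).resolve_left (hf.apply_ne i).symm).symm

theorem injOn_part_openers [Preorder α] (hf : IsPartnerMap π f) :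
    Set.InjOn π.part (openers f) := by
  intro i hi j hj hij
  have hmem : j ∈ π.part i := hij ▸ π.mem_part_self.2 (Finset.mem_univ j)
  rcases hf.mem_part_iff.1 hmem with rfl | rfl
  · rfl
  · rw [mem_openers, hf.involutive] at hj
    exact absurd hi hj.asymm

theorem mem_openers_iff_forall_le [PartialOrder α] (hf : IsPartnerMap π f) {i : α} :
    i ∈ openers f ↔ ∀ j ∈ π.part i, i ≤ j := by
  simp only [hf.mem_part_iff, forall_eq_or_imp, forall_eq, le_refl, true_and, mem_openers,
    (hf.apply_ne i).symm.le_iff_lt]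

end Fintype

variable {n d : ℕ} {π : Finpartition (Finset.univ : Finset (Fin n))} {f : Fin n → Fin n}

theorem sameBlock_iff (hf : IsPartnerMap π f) {i j : Fin n} :
    SameBlock π i j ↔ j = i ∨ j = f i := by
  rw [← hf.mem_part_iff, π.mem_part_iff_exists]
  simp only [SameBlock, and_comm]

theorem isNoncrossingMatching (hf : IsPartnerMap π f) (hπ : IsNoncrossing π) :
    IsNoncrossingMatching f where
  involutive := hf.involutive
  apply_ne := hf.apply_ne
  nested {i j} hij hj := by
    by_contra! hlt
    have hsame : SameBlock π i j :=
      hπ i j (f i) (f j) hij hj hlt (hf.sameBlock_iff.2 (.inr rfl)) (hf.sameBlock_iff.2 (.inr rfl))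
    exact (hf.sameBlock_iff.1 hsame).elim hij.ne' hj.ne

theorem div_apply_ne (hf : IsPartnerMap π f) (hπ : IsMPartite d π) (i : Fin n) :
    (f i : ℕ) / d ≠ (i : ℕ) / d := fun hdiv ↦ by
  have hcard := hπ _ (π.part_mem.2 (Finset.mem_univ i)) ((i : ℕ) / d)
  exact hf.apply_ne i <| Finset.card_le_one.1 hcard
    (f i) (Finset.mem_filter.2 ⟨hf.mem_part_iff.2 (.inr rfl), hdiv⟩)
    i (Finset.mem_filter.2 ⟨hf.mem_part_iff.2 (.inl rfl), rfl⟩)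

theorem outCount_eq_ncard (hf : IsPartnerMap π f) (d k : ℕ) :
    outCount d π k = (openers f ∩ (fun i : Fin n ↦ (i : ℕ) / d) ⁻¹' {k}).ncard := by
  rw [← (hf.injOn_part_openers.mono Set.inter_subset_left).ncard_image, outCount,
    ← Set.ncard_coe_finset]
  congr 1
  ext B
  simp only [Finset.coe_filter, Set.mem_ofPred_eq, Set.mem_image, Set.mem_inter_iff,
    Set.mem_preimage, Set.mem_singleton_iff, hf.mem_openers_iff_forall_le]
  constructor
  · rintro ⟨hB, i, hi, hk, hmin⟩
    have hpart : π.part i = B := π.part_eq_of_mem hB hi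
    exact ⟨i, ⟨hpart ▸ hmin, hk⟩, hpart⟩
  · rintro ⟨i, ⟨hmin, hk⟩, rfl⟩
    exact ⟨π.part_mem.2 (Finset.mem_univ i), i, π.mem_part_self.2 (Finset.mem_univ i), hk, hmin⟩

end IsPartnerMap

theorem noncrossing_pairing_determined_by_outCount_general {n d : ℕ}
    {π π' : Finpartition (Finset.univ : Finset (Fin n))}
    (hπ : IsNoncrossing π ∧ IsPairPartition π ∧ IsMPartite d π)
    (hπ' : IsNoncrossing π' ∧ IsPairPartition π' ∧ IsMPartite d π')
    (h : ∀ k : ℕ, outCount d π k = outCount d π' k) : π = π' := by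
  obtain ⟨hnc, hpair, hpartite⟩ := hπ
  obtain ⟨hnc', hpair', hpartite'⟩ := hπ'
  obtain ⟨f, hf⟩ := hpair.exists_isPartnerMap
  obtain ⟨g, hg⟩ := hpair'.exists_isPartnerMap
  have interval_mono : Monotone fun i : Fin n ↦ (i : ℕ) / d :=
    fun _ _ hij ↦ Nat.div_le_div_right hij
  have hfg : f = g :=
    (hf.isNoncrossingMatching hnc).eq_of_ncard_openers_eq (hg.isNoncrossingMatching hnc')
      interval_mono (hf.div_apply_ne hpartite) (hg.div_apply_ne hpartite')
      fun k ↦ by rw [← hf.outCount_eq_ncard, ← hg.outCount_eq_ncard, h]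
  exact hf.partition_eq (hfg ▸ hg)

/-- **The outgoing-edge statistic determines a noncrossing pairing.**  The map sending
an `m`-partite noncrossing pair partition `π` of `{1, ..., md}` to the tuple of its
outgoing-edge counts `(s₁(π), ..., s_m(π))` is injective. -/
theorem noncrossing_pairing_determined_by_outCount (m d : ℕ)
    (π π' : Finpartition (Finset.univ : Finset (Fin (m * d))))
    (hπ : IsNoncrossing π ∧ IsPairPartition π ∧ IsMPartite d π)
    (hπ' : IsNoncrossing π' ∧ IsPairPartition π' ∧ IsMPartite d π')
    (h : ∀ k : ℕ, outCount d π k = outCount d π' k) : π = π' :=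
  noncrossing_pairing_determined_by_outCount_general hπ hπ' h
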